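/- arXiv:2201.08355 — 3 statements merged into one kernel-verified Lean document; each statement's English description precedes it below -/
import Mathlib

section
/- Let P0 be a fixed prior probability distribution on the policy space Π, let δ, δ' ∈ (0,1), and let P : ε^N → 𝒫(Π) be any measurable assignment of a posterior distribution to each training sample. Draw S = (E_1,…,E_N) i.i.d. from D, and then draw policies π_1,…,π_L i.i.d. from P(S). Let m̂ = (1/(N·L)) Σ_{i=1}^L Σ_{j=1}^N R(π_i, E_j) denote the empirical estimate of R_S(P(S)). Then with probability at least 1 − δ − δ' over the joint draw of S and π_1,…,π_L: R_D(P(S)) ≥ m̂ − sqrt( log(2/δ') / (2L) ) − sqrt( ( KL(P(S)‖P0) + log(2√N/δ) ) / (2N) ). -/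
open MeasureTheory Real
open scoped ENNReal

open scoped Classical in
/-- Kullback–Leibler divergence between measures, valued in `ℝ≥0∞`
(`⊤` when `P` is not absolutely continuous w.r.t. `P0`, or the integral diverges). -/
noncomputable def klDiv {Pol : Type*} [MeasurableSpace Pol] (P P0 : Measure Pol) : ℝ≥0∞ :=
  if P ≪ P0 ∧ Integrable (fun x => Real.log (P.rnDeriv P0 x).toReal) P then
    ENNReal.ofReal (∫ x, Real.log (P.rnDeriv P0 x).toReal ∂P)
  else ⊤

/-- True expected reward: `R_D(P) = E_{E∼D} E_{π∼P}[R(π,E)]`. -/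
noncomputable def trueReward {Pol Env : Type*} [MeasurableSpace Pol] [MeasurableSpace Env]
    (D : Measure Env) (R : Pol → Env → ℝ) (P : Measure Pol) : ℝ :=
  ∫ E, ∫ p, R p E ∂P ∂D

lemma aux_key (v : ℝ) (h0 : 0 ≤ v) (h1 : v ≤ 1) :
    1 ≤ Real.exp (-v ^ 2 / 2) + Real.exp (-(2 - v) ^ 2 / 2) := by
  have a := Real.add_one_le_exp (-v ^ 2 / 2)
  have b := Real.add_one_le_exp (-1 + 3 / 4 * v)
  have c : Real.exp (-1 + 3 / 4 * v) ^ 2 ≤ Real.exp (-(2 - v) ^ 2 / 2) := by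
    rw [← Real.exp_nat_mul]
    apply Real.exp_le_exp.2
    push_cast
    nlinarith
  nlinarith

lemma aux_key2 (v : ℝ) (h0 : 0 ≤ v) (h1 : v ≤ 2) :
    1 ≤ Real.exp (-v ^ 2 / 2) + Real.exp (-(2 - v) ^ 2 / 2) := by
  rcases le_total v 1 with h | h
  · exact aux_key v h0 h
  · have := aux_key (2 - v) (by linarith) (by linarith)
    rw [show (2 - (2 - v)) = v by ring] at this
    linarith

lemma aux_exp (l u : ℝ) : Real.exp (l * u - l ^ 2 / 2)
    = Real.exp (u ^ 2 / 2) * Real.exp (-(u - l) ^ 2 / 2) := by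
  rw [← Real.exp_add]; congr 1; ring

lemma aux_two (a u : ℝ) (h0 : a ≤ u) (h1 : u ≤ a + 2) :
    Real.exp (u ^ 2 / 2) ≤ Real.exp (a * u - a ^ 2 / 2)
      + Real.exp ((a + 2) * u - (a + 2) ^ 2 / 2) := by
  rw [aux_exp, aux_exp, ← mul_add]
  have := aux_key2 (u - a) (by linarith) (by linarith)
  rw [show -(2 - (u - a)) ^ 2 / 2 = -(u - (a + 2)) ^ 2 / 2 by ring] at this
  exact le_mul_of_one_le_right (Real.exp_pos _).le this

lemma aux_mixture (N : ℕ) (hN : 0 < N) : ∃ (K : ℕ) (w l : ℕ → ℝ), (∀ k, 0 ≤ w k) ∧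
    (∑ k ∈ Finset.range K, w k ≤ 2 * Real.sqrt N) ∧
    ∀ u : ℝ, u ≤ 2 * Real.sqrt N →
      Real.exp ((max u 0) ^ 2 / 2)
        ≤ ∑ k ∈ Finset.range K, w k * Real.exp (l k * u - (l k) ^ 2 / 2) := by
  by_cases h2 : N = 2
  · subst h2
    have hs : Real.sqrt (2 : ℕ) ^ 2 = 2 := by norm_num
    have hs0 : 0 ≤ Real.sqrt (2 : ℕ) := Real.sqrt_nonneg _
    generalize Real.sqrt (2 : ℕ) = s at hs hs0
    have hs1 : 1.41 ≤ s := by nlinarith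
    have hs2 : s ≤ 1.415 := by nlinarith
    refine ⟨2, fun k => if k = 0 then 1 else 1.8, fun k => 2 * k, fun k => ?_, ?_, ?_⟩
    · dsimp only; split_ifs <;> norm_num
    · simp [Finset.sum_range_succ]; linarith
    · intro u hu
      simp only [Finset.sum_range_succ, Finset.sum_range_zero]
      norm_num
      rcases le_total u 0 with h | h
      · rw [max_eq_right h]
        have := Real.exp_pos (2 * u - 2)
        norm_num
        positivity
      · rw [max_eq_left h]
        rcases le_total u 2 with h' | h'
        · have := aux_two 0 u h (by linarith)
          norm_num at this
          have := Real.exp_pos (2 * u - 2)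
          linarith
        · have e := aux_exp 2 u
          norm_num at e
          rw [e]
          have a := Real.add_one_le_exp (-(u - 2) ^ 2 / 2)
          have b := Real.exp_pos (u ^ 2 / 2)
          have c : 1 ≤ 9 / 5 * Real.exp (-(u - 2) ^ 2 / 2) := by nlinarith
          nlinarith
  · have hs : Real.sqrt N ^ 2 = N := Real.sq_sqrt (by positivity)
    have hs0 : 0 ≤ Real.sqrt N := Real.sqrt_nonneg _
    have hceil := Nat.ceil_lt_add_one hs0
    have hceil' := Nat.le_ceil (Real.sqrt N)
    refine ⟨⌈Real.sqrt N⌉₊ + 1, fun k => 1, fun k => 2 * k, fun k => zero_le_one, ?_, ?_⟩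
    · simp only [Finset.sum_const, Finset.card_range, nsmul_eq_mul, mul_one]
      push_cast
      rcases Nat.lt_or_ge N 4 with h4 | h4
      · have : N = 1 ∨ N = 3 := by omega
        rcases this with rfl | h3
        · norm_num
        · have h3' : (N : ℝ) = 3 := by rw [h3]; norm_num
          have hs := hs.trans h3'
          have hs1 : 1.7 ≤ Real.sqrt N := by nlinarith
          have hs2 : Real.sqrt N ≤ 2 := by nlinarith
          have : ⌈Real.sqrt N⌉₊ ≤ 2 := Nat.ceil_le.2 (by exact_mod_cast hs2)
          have : (⌈Real.sqrt N⌉₊ : ℝ) ≤ 2 := by exact_mod_cast this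
          linarith
      · have : (4 : ℝ) ≤ N := by exact_mod_cast h4
        have : 2 ≤ Real.sqrt N := by nlinarith
        linarith
    · intro u hu
      simp only [one_mul]
      rcases le_or_gt u 0 with h | h
      · rw [max_eq_right h]
        have : Real.exp (2 * ((0 : ℕ) : ℝ) * u - (2 * ((0 : ℕ) : ℝ)) ^ 2 / 2) ≤
            ∑ k ∈ Finset.range (⌈Real.sqrt N⌉₊ + 1),
              Real.exp (2 * (k : ℝ) * u - (2 * (k : ℝ)) ^ 2 / 2) :=
          Finset.single_le_sum (f := fun k : ℕ =>
            Real.exp (2 * (k : ℝ) * u - (2 * (k : ℝ)) ^ 2 / 2))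
            (fun i _ => (Real.exp_pos _).le) (by simp)
        simpa using this
      · rw [max_eq_left h.le]
        obtain ⟨k, hk⟩ : ∃ k, ⌈u / 2⌉₊ = k + 1 :=
          Nat.exists_eq_succ_of_ne_zero (Nat.ceil_pos.2 (by positivity)).ne'
        have hkK : k + 1 ≤ ⌈Real.sqrt N⌉₊ := by
          rw [← hk]; exact Nat.ceil_mono (by linarith)
        have c1 := Nat.le_ceil (u / 2)
        have c2 := Nat.ceil_lt_add_one (a := u / 2) (by positivity)
        rw [hk] at c1 c2
        push_cast at c1 c2
        have t := aux_two (2 * k) u (by linarith) (by linarith)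
        refine t.trans ?_
        have hsub : ({k, k + 1} : Finset ℕ) ⊆ Finset.range (⌈Real.sqrt N⌉₊ + 1) := by
          intro i hi; simp at hi ⊢; omega
        have := Finset.sum_le_sum_of_subset_of_nonneg (f := fun k : ℕ =>
            Real.exp (2 * (k : ℝ) * u - (2 * (k : ℝ)) ^ 2 / 2)) hsub
            (fun i _ _ => (Real.exp_pos _).le)
        rw [Finset.sum_pair (by omega)] at this
        refine le_trans (le_of_eq ?_) this
        push_cast
        ring_nf

lemma aux_subG {Ω : Type*} [MeasurableSpace Ω] (ν : Measure Ω) [IsProbabilityMeasure ν]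
    (g : Ω → ℝ) (hg : Measurable g) (hb : ∀ x, g x ∈ Set.Icc (0 : ℝ) 1) (n : ℕ) :
    ProbabilityTheory.HasSubgaussianMGF
      (fun ω : Fin n → Ω => ∑ j, (g (ω j) - ∫ x, g x ∂ν)) ((n : NNReal) / 4)
      (Measure.pi fun _ : Fin n => ν) := by
  have hi := ProbabilityTheory.iIndepFun_pi (μ := fun _ : Fin n => ν)
    (X := fun _ x => g x - ∫ x, g x ∂ν) (fun i => (hg.sub_const _).aemeasurable)
  have h1 := ProbabilityTheory.hasSubgaussianMGF_of_mem_Icc (μ := ν) hg.aemeasurable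
    (ae_of_all _ hb)
  have := ProbabilityTheory.HasSubgaussianMGF.sum_of_iIndepFun hi (s := Finset.univ)
    (c := fun _ => (‖(1 : ℝ) - 0‖₊ / 2) ^ 2) (fun i _ => by
      apply ProbabilityTheory.HasSubgaussianMGF.of_map (Y := fun ω : Fin n → Ω => ω i)
        (X := fun x => g x - ∫ x, g x ∂ν)
      · exact (measurable_pi_apply i).aemeasurable
      · rw [(measurePreserving_eval (fun _ : Fin n => ν) i).map_eq]
        exact h1)
  convert this using 1
  simp
  norm_num
  ring

lemma aux_expmoment {Ω : Type*} [MeasurableSpace Ω] (ν : Measure Ω) [IsProbabilityMeasure ν]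
    (g : Ω → ℝ) (hg : Measurable g) (hb : ∀ x, g x ∈ Set.Icc (0 : ℝ) 1) (N : ℕ) (hN : 0 < N) :
    ∫⁻ ω : Fin N → Ω, ENNReal.ofReal (Real.exp
      ((max (2 / Real.sqrt N * ∑ j, (g (ω j) - ∫ x, g x ∂ν)) 0) ^ 2 / 2))
      ∂(Measure.pi fun _ : Fin N => ν) ≤ ENNReal.ofReal (2 * Real.sqrt N) := by
  obtain ⟨K, w, l, hw, hsum, hu⟩ := aux_mixture N hN
  have hsub := aux_subG ν g hg hb N
  have hN' : (0 : ℝ) < N := by exact_mod_cast hN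
  have hs : Real.sqrt N ^ 2 = N := Real.sq_sqrt hN'.le
  have hs0 : 0 < Real.sqrt N := Real.sqrt_pos.2 hN'
  have hm0 : 0 ≤ ∫ x, g x ∂ν := integral_nonneg fun x => (hb x).1
  have hbound : ∀ ω : Fin N → Ω,
      2 / Real.sqrt N * ∑ j, (g (ω j) - ∫ x, g x ∂ν) ≤ 2 * Real.sqrt N := by
    intro ω
    have : ∑ j, (g (ω j) - ∫ x, g x ∂ν) ≤ ∑ j : Fin N, (1 : ℝ) :=
      Finset.sum_le_sum fun j _ => by linarith [(hb (ω j)).2]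
    simp at this
    have e : 2 * Real.sqrt N = 2 / Real.sqrt N * N := by
      field_simp
      nlinarith
    rw [e]
    simp only [Finset.sum_sub_distrib, Finset.sum_const, Finset.card_univ, Fintype.card_fin,
      nsmul_eq_mul]
    gcongr
    linarith
  have hint : ∀ k, Integrable (fun ω : Fin N → Ω => Real.exp
      (l k * (2 / Real.sqrt N * ∑ j, (g (ω j) - ∫ x, g x ∂ν)) - (l k) ^ 2 / 2))
      (Measure.pi fun _ : Fin N => ν) := by
    intro k
    have := (hsub.integrable_exp_mul (l k * (2 / Real.sqrt N))).mul_const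
      (Real.exp (-((l k) ^ 2 / 2)))
    refine this.congr (ae_of_all _ fun ω => ?_)
    simp only
    rw [← Real.exp_add]
    congr 1; ring
  have hle : ∀ k, ∫ ω : Fin N → Ω, Real.exp
      (l k * (2 / Real.sqrt N * ∑ j, (g (ω j) - ∫ x, g x ∂ν)) - (l k) ^ 2 / 2)
      ∂(Measure.pi fun _ : Fin N => ν) ≤ 1 := by
    intro k
    have := hsub.mgf_le (l k * (2 / Real.sqrt N))
    unfold ProbabilityTheory.mgf at this
    have e : ∀ ω : Fin N → Ω, Real.exp
      (l k * (2 / Real.sqrt N * ∑ j, (g (ω j) - ∫ x, g x ∂ν)) - (l k) ^ 2 / 2)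
       = Real.exp (l k * (2 / Real.sqrt N) * ∑ j, (g (ω j) - ∫ x, g x ∂ν))
        * Real.exp (-((l k) ^ 2 / 2)) := by
      intro ω
      rw [← Real.exp_add]
      congr 1; ring
    simp_rw [e]
    rw [integral_mul_const]
    have e2 : (((N : NNReal) / 4 : NNReal) : ℝ) * (l k * (2 / Real.sqrt N)) ^ 2 / 2
        = l k ^ 2 / 2 := by
      push_cast
      rw [mul_pow, div_pow, hs]
      field_simp
      ring
    rw [e2] at this
    calc _ ≤ Real.exp (l k ^ 2 / 2) * Real.exp (-((l k) ^ 2 / 2)) := by gcongr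
      _ = 1 := by rw [← Real.exp_add]; simp
  calc _ ≤ ∫⁻ ω : Fin N → Ω, ENNReal.ofReal (∑ k ∈ Finset.range K, w k * Real.exp
      (l k * (2 / Real.sqrt N * ∑ j, (g (ω j) - ∫ x, g x ∂ν)) - (l k) ^ 2 / 2))
      ∂(Measure.pi fun _ : Fin N => ν) :=
        lintegral_mono fun ω => ENNReal.ofReal_le_ofReal (hu _ (hbound ω))
    _ = ENNReal.ofReal (∫ ω : Fin N → Ω, (∑ k ∈ Finset.range K, w k * Real.exp
      (l k * (2 / Real.sqrt N * ∑ j, (g (ω j) - ∫ x, g x ∂ν)) - (l k) ^ 2 / 2))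
      ∂(Measure.pi fun _ : Fin N => ν)) := by
        rw [ofReal_integral_eq_lintegral_ofReal]
        · exact integrable_finsetSum _ fun k _ => (hint k).const_mul _
        · exact ae_of_all _ fun ω => Finset.sum_nonneg fun k _ =>
            mul_nonneg (hw k) (Real.exp_pos _).le
    _ ≤ _ := by
        apply ENNReal.ofReal_le_ofReal
        rw [integral_finsetSum _ fun k _ => (hint k).const_mul _]
        refine le_trans (Finset.sum_le_sum fun k _ => ?_) hsum
        rw [integral_const_mul]
        exact mul_le_of_le_one_right (hw k) (hle k)

lemma aux_DV {Ω : Type*} [MeasurableSpace Ω] (μ ν : Measure Ω) [IsProbabilityMeasure μ]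
    [IsProbabilityMeasure ν] (h : klDiv μ ν ≠ ⊤) (f : Ω → ℝ) (hf : Integrable f μ)
    (hfν : Integrable (fun x => Real.exp (f x)) ν) :
    ∫ x, f x ∂μ ≤ (klDiv μ ν).toReal + Real.log (∫ x, Real.exp (f x) ∂ν) := by
  unfold klDiv at h ⊢
  split_ifs at h ⊢ with hc
  · obtain ⟨hac, hi⟩ := hc
    change Integrable (llr μ ν) μ at hi
    have hprob := isProbabilityMeasure_tilted hfν
    have hac' : μ ≪ ν.tilted f := hac.trans (absolutelyContinuous_tilted hfν)
    have h1 := integral_llr_tilted_right hac hf hfν hi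
    have h2 := InformationTheory.integral_llr_add_sub_measure_univ_nonneg hac'
      (integrable_llr_tilted_right hac hf hi hfν)
    have h3 : ∫ x, Real.log (μ.rnDeriv ν x).toReal ∂μ ≤
      (ENNReal.ofReal (∫ x, Real.log (μ.rnDeriv ν x).toReal ∂μ)).toReal := by
      rw [ENNReal.toReal_ofReal']; exact le_max_left _ _
    simp only [probReal_univ] at h2
    simp only [llr_def] at h1 h2 h3
    linarith
  · exact absurd rfl h

lemma aux_hoeffding {Ω : Type*} [MeasurableSpace Ω] (ν : Measure Ω) [IsProbabilityMeasure ν]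
    (g : Ω → ℝ) (hg : Measurable g) (hb : ∀ x, g x ∈ Set.Icc (0 : ℝ) 1) (L : ℕ) (hL : 0 < L)
    (δ : ℝ) (hδ : δ ∈ Set.Ioo (0 : ℝ) 1) :
    ENNReal.ofReal (1 - δ) ≤ (Measure.pi fun _ : Fin L => ν)
      {ω | (1 / (L : ℝ)) * ∑ i, g (ω i) - Real.sqrt (Real.log (2 / δ) / (2 * L))
        ≤ ∫ x, g x ∂ν} := by
  obtain ⟨d0, d1⟩ := hδ
  have hL' : (0 : ℝ) < L := by exact_mod_cast hL
  have hlog : 0 ≤ Real.log (2 / δ) := Real.log_nonneg (by rw [le_div_iff₀ d0]; linarith)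
  set t := Real.sqrt (Real.log (2 / δ) / (2 * L)) with ht
  have ht0 : 0 ≤ t := Real.sqrt_nonneg _
  have ht2 : t ^ 2 = Real.log (2 / δ) / (2 * L) := Real.sq_sqrt (by positivity)
  have h := (aux_subG ν g hg hb L).measure_ge_le (ε := L * t) (by positivity)
  have e : -((L : ℝ) * t) ^ 2 / (2 * ((((L : NNReal) / 4 : NNReal)) : ℝ))
      = - Real.log (2 / δ) := by
    push_cast
    rw [mul_pow, ht2]
    field_simp
    ring
  rw [e, Real.exp_neg, Real.exp_log (by positivity), inv_div] at h
  have hmeas : MeasurableSet {ω : Fin L → Ω | (L : ℝ) * t ≤ ∑ j, (g (ω j) - ∫ x, g x ∂ν)} :=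
    measurableSet_le measurable_const (by fun_prop)
  have hc := probReal_compl_eq_one_sub (μ := Measure.pi fun _ : Fin L => ν) hmeas
  calc ENNReal.ofReal (1 - δ) ≤ ENNReal.ofReal ((Measure.pi fun _ : Fin L => ν).real
        {ω : Fin L → Ω | (L : ℝ) * t ≤ ∑ j, (g (ω j) - ∫ x, g x ∂ν)}ᶜ) := by
        apply ENNReal.ofReal_le_ofReal
        rw [hc]; linarith
    _ = (Measure.pi fun _ : Fin L => ν)
        {ω : Fin L → Ω | (L : ℝ) * t ≤ ∑ j, (g (ω j) - ∫ x, g x ∂ν)}ᶜ := by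
        rw [ofReal_measureReal]
    _ ≤ _ := by
        apply measure_mono
        intro ω hω
        simp only [Set.mem_compl_iff, Set.mem_ofPred_eq, not_le, Finset.sum_sub_distrib,
          Finset.sum_const, Finset.card_univ, Fintype.card_fin, nsmul_eq_mul] at hω ⊢
        have : (1 / (L : ℝ)) * ∑ i, g (ω i) ≤ (1 / (L : ℝ)) * (L * t + L * ∫ x, g x ∂ν) := by
          gcongr; linarith
        have e : (1 / (L : ℝ)) * (L * t + L * ∫ x, g x ∂ν) = t + ∫ x, g x ∂ν := by
          field_simp
        linarith

lemma aux_meas_pi {α Ω : Type*} [MeasurableSpace α] [MeasurableSpace Ω] (P : α → Measure Ω)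
    (hp : ∀ a, IsProbabilityMeasure (P a)) (hP : Measurable P) (L : ℕ) :
    Measurable fun a => Measure.pi fun _ : Fin L => P a := by
  apply Measurable.measure_of_isPiSystem_of_isProbabilityMeasure generateFrom_pi.symm isPiSystem_pi
  rintro _ ⟨s, hs, rfl⟩
  simp only [Measure.pi_pi]
  exact Finset.measurable_prod _ fun i _ =>
    (Measure.measurable_coe (hs i (Set.mem_univ i))).comp hP

lemma aux_avg (N : ℕ) (hN : 0 < N) (a : Fin N → ℝ) (h : ∀ j, a j ∈ Set.Icc (0 : ℝ) 1) :
    (1 / (N : ℝ)) * ∑ j, a j ∈ Set.Icc (0 : ℝ) 1 := by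
  have hN' : (0 : ℝ) < N := by exact_mod_cast hN
  have h0 : 0 ≤ ∑ j, a j := Finset.sum_nonneg fun j _ => (h j).1
  have h1 : ∑ j, a j ≤ ∑ j : Fin N, (1 : ℝ) := Finset.sum_le_sum fun j _ => (h j).2
  simp only [Finset.sum_const, Finset.card_univ, Fintype.card_fin, nsmul_eq_mul, mul_one] at h1
  refine ⟨by positivity, ?_⟩
  rw [one_div, inv_mul_le_iff₀ hN']
  linarith

lemma aux_det {Pol Env : Type*} [MeasurableSpace Pol] [MeasurableSpace Env]
    (D : Measure Env) [IsProbabilityMeasure D]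
    (R : Pol → Env → ℝ) (hR_meas : Measurable (Function.uncurry R))
    (hR_bdd : ∀ p E, R p E ∈ Set.Icc (0 : ℝ) 1)
    (P0 : Measure Pol) [IsProbabilityMeasure P0]
    (N : ℕ) (hN : 0 < N) (δ : ℝ) (d0 : 0 < δ) (S : Fin N → Env)
    (Q : Measure Pol) [IsProbabilityMeasure Q] (hkl : klDiv Q P0 ≠ ⊤)
    (hZ : ∫⁻ p, ENNReal.ofReal (Real.exp
      ((max (2 / Real.sqrt N * ∑ j, (R p (S j) - ∫ E, R p E ∂D)) 0) ^ 2 / 2)) ∂P0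
      < ENNReal.ofReal (2 * Real.sqrt N / δ)) :
    ∫ p, (1 / (N : ℝ)) * ∑ j, R p (S j) ∂Q
      - Real.sqrt (((klDiv Q P0).toReal + Real.log (2 * Real.sqrt N / δ)) / (2 * N))
      ≤ trueReward D R Q := by
  have hN' : (0 : ℝ) < N := by exact_mod_cast hN
  have hs0 : 0 < Real.sqrt N := Real.sqrt_pos.2 hN'
  have hs : Real.sqrt N ^ 2 = N := Real.sq_sqrt hN'.le
  have hm : Measurable fun p => ∫ E, R p E ∂D :=
    (hR_meas.stronglyMeasurable.integral_prod_right (ν := D)).measurable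
  have hr : Measurable fun p => (1 / (N : ℝ)) * ∑ j, R p (S j) :=
    (Finset.measurable_sum _ fun j _ => hR_meas.comp measurable_prodMk_right).const_mul _
  have hmb : ∀ p, ∫ E, R p E ∂D ∈ Set.Icc (0 : ℝ) 1 := by
    intro p
    refine ⟨integral_nonneg fun E => (hR_bdd p E).1, ?_⟩
    have := integral_mono_of_nonneg (μ := D) (ae_of_all _ fun E => (hR_bdd p E).1)
      (integrable_const (1 : ℝ)) (ae_of_all _ fun E => (hR_bdd p E).2)
    simpa using this
  have hrb : ∀ p, (1 / (N : ℝ)) * ∑ j, R p (S j) ∈ Set.Icc (0 : ℝ) 1 := fun p =>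
    aux_avg N hN _ fun j => hR_bdd p (S j)
  have hmi : Integrable (fun p => ∫ E, R p E ∂D) Q :=
    Integrable.of_mem_Icc 0 1 hm.aemeasurable (ae_of_all _ hmb)
  have hri : Integrable (fun p => (1 / (N : ℝ)) * ∑ j, R p (S j)) Q :=
    Integrable.of_mem_Icc 0 1 hr.aemeasurable (ae_of_all _ hrb)
  have htrue : trueReward D R Q = ∫ p, ∫ E, R p E ∂D ∂Q := by
    unfold trueReward
    rw [integral_integral_swap]
    exact Integrable.of_mem_Icc 0 1 (hR_meas.comp measurable_swap).aemeasurable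
      (ae_of_all _ fun x => hR_bdd x.2 x.1)
  have hu : ∀ p, 2 / Real.sqrt N * ∑ j, (R p (S j) - ∫ E, R p E ∂D)
      = 2 * Real.sqrt N * ((1 / (N : ℝ)) * ∑ j, R p (S j) - ∫ E, R p E ∂D) := by
    intro p
    simp only [Finset.sum_sub_distrib, Finset.sum_const, Finset.card_univ, Fintype.card_fin,
      nsmul_eq_mul]
    have : 2 / Real.sqrt N = 2 * Real.sqrt N / N := by
      rw [div_eq_div_iff hs0.ne' hN'.ne']; nlinarith
    rw [this]
    field_simp
  simp_rw [hu] at hZ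
  generalize hrdef : (fun p => (1 / (N : ℝ)) * ∑ j, R p (S j)) = r at hr hrb hri
  have hrp : ∀ p, (1 / (N : ℝ)) * ∑ j, R p (S j) = r p := fun p => congrFun hrdef p
  simp_rw [hrp] at hZ hrb ⊢
  rw [htrue]
  generalize hmdef : (fun p => ∫ E, R p E ∂D) = m at hm hmi
  have hmp : ∀ p, ∫ E, R p E ∂D = m p := fun p => congrFun hmdef p
  simp_rw [hmp] at hZ hmb ⊢
  set g : Pol → ℝ := fun p => max (2 * Real.sqrt N * (r p - m p)) 0 with hg
  have hgm : Measurable g := ((hr.sub hm).const_mul _).max measurable_const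
  have hgb : ∀ p, g p ∈ Set.Icc (0 : ℝ) (2 * Real.sqrt N) := by
    intro p
    refine ⟨le_max_right _ _, max_le ?_ (by positivity)⟩
    have : r p - m p ≤ 1 := by linarith [(hrb p).2, (hmb p).1]
    exact mul_le_of_le_one_right (by positivity) this
  have hgi : Integrable g Q := Integrable.of_mem_Icc _ _ hgm.aemeasurable (ae_of_all _ hgb)
  have hg2b : ∀ p, g p ^ 2 / 2 ∈ Set.Icc (0 : ℝ) ((2 * Real.sqrt N) ^ 2 / 2) := by
    intro p
    refine ⟨by positivity, ?_⟩
    have := hgb p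
    have h0 := this.1
    have h1 := this.2
    gcongr
  have hfi : Integrable (fun p => g p ^ 2 / 2) Q :=
    Integrable.of_mem_Icc _ _ ((hgm.pow_const 2).div_const 2).aemeasurable (ae_of_all _ hg2b)
  have hei : Integrable (fun p => Real.exp (g p ^ 2 / 2)) P0 :=
    Integrable.of_mem_Icc 1 (Real.exp ((2 * Real.sqrt N) ^ 2 / 2))
      ((hgm.pow_const 2).div_const 2).exp.aemeasurable
      (ae_of_all _ fun p => ⟨Real.one_le_exp (hg2b p).1, Real.exp_le_exp.2 (hg2b p).2⟩)
  have hDV := aux_DV Q P0 hkl _ hfi hei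
  have hE1 : 1 ≤ ∫ p, Real.exp (g p ^ 2 / 2) ∂P0 := by
    have := integral_mono (μ := P0) (integrable_const (1 : ℝ)) hei
      (fun p => Real.one_le_exp (hg2b p).1)
    simpa using this
  have hE2 : ∫ p, Real.exp (g p ^ 2 / 2) ∂P0 ≤ 2 * Real.sqrt N / δ := by
    rw [← ofReal_integral_eq_lintegral_ofReal hei (ae_of_all _ fun p => (Real.exp_pos _).le)] at hZ
    exact ((ENNReal.ofReal_lt_ofReal_iff (by positivity)).1 hZ).le
  have hlog := Real.log_le_log (by linarith) hE2
  have hJ : (∫ p, g p ∂Q) ^ 2 ≤ 2 * ∫ p, g p ^ 2 / 2 ∂Q := by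
    set a := ∫ p, g p ∂Q
    have h0 : 0 ≤ ∫ p, (g p ^ 2 / 2 - a * g p + a ^ 2 / 2) ∂Q :=
      integral_nonneg fun p => by
        have := sq_nonneg (g p - a)
        simp only [Pi.zero_apply]
        nlinarith
    have hsubi : Integrable (fun p => g p ^ 2 / 2 - a * g p) Q := hfi.sub (hgi.const_mul a)
    rw [integral_add hsubi (integrable_const _),
      integral_sub hfi (hgi.const_mul a), integral_const_mul] at h0
    simp only [integral_const, probReal_univ, smul_eq_mul, one_mul] at h0
    change 0 ≤ _ - a * a + _ at h0
    nlinarith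
  have hle : 2 * Real.sqrt N * (∫ p, r p ∂Q - ∫ p, m p ∂Q) ≤ ∫ p, g p ∂Q := by
    rw [← integral_sub hri hmi, ← integral_const_mul]
    exact integral_mono ((hri.sub hmi).const_mul _) hgi fun p => le_max_left _ _
  have hG0 : 0 ≤ ∫ p, g p ∂Q := integral_nonneg fun p => (hgb p).1
  generalize ∫ p, g p ∂Q = G at *
  rcases le_total (∫ p, r p ∂Q) (∫ p, m p ∂Q) with h | h
  · have := Real.sqrt_nonneg
      (((klDiv Q P0).toReal + Real.log (2 * Real.sqrt N / δ)) / (2 * N))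
    linarith
  · have : ∫ p, r p ∂Q - ∫ p, m p ∂Q ≤
        Real.sqrt (((klDiv Q P0).toReal + Real.log (2 * Real.sqrt N / δ)) / (2 * N)) := by
      apply Real.le_sqrt_of_sq_le
      have hx : 0 ≤ ∫ p, r p ∂Q - ∫ p, m p ∂Q := by linarith
      generalize ∫ p, r p ∂Q - ∫ p, m p ∂Q = X at *
      rw [le_div_iff₀ (by positivity)]
      have h4 : (2 * Real.sqrt N * X) ^ 2 ≤ G ^ 2 := by gcongr
      rw [mul_pow, mul_pow, hs] at h4
      nlinarith
    linarith

/-- **Computable PAC-Bayes certificate (PAC-Bayes bound + sample convergence bound).**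
Draw `S = (E_1,…,E_N) ∼ D^N` and then `π_1,…,π_L` i.i.d. from the posterior `P(S)`;
the joint law is the monadic bind of `D^N` with `S ↦ (S, ·)_* (P(S))^L`.  With
probability at least `1 − δ − δ'` over this joint draw,
`R_D(P(S)) ≥ m̂ − sqrt(log(2/δ')/(2L)) − sqrt((KL(P(S)‖P0) + log(2√N/δ))/(2N))`,
where `m̂ = (1/(N·L)) Σ_i Σ_j R(π_i, E_j)`.
(When `KL(P(S)‖P0) = ∞` the claimed inequality is vacuous, which is expressed by the
hypothesis `klDiv (P S) P0 ≠ ⊤` guarding the inequality.) -/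
theorem pac_bayes_with_sample_convergence
    {Pol Env : Type*} [MeasurableSpace Pol] [MeasurableSpace Env]
    (D : Measure Env) [IsProbabilityMeasure D]
    (R : Pol → Env → ℝ) (hR_meas : Measurable (Function.uncurry R))
    (hR_bdd : ∀ p E, R p E ∈ Set.Icc (0 : ℝ) 1)
    (P0 : Measure Pol) [IsProbabilityMeasure P0]
    (N L : ℕ) (hN : 0 < N) (hL : 0 < L)
    (δ δ' : ℝ) (hδ : δ ∈ Set.Ioo (0 : ℝ) 1) (hδ' : δ' ∈ Set.Ioo (0 : ℝ) 1)
    (P : (Fin N → Env) → Measure Pol)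
    (hP_prob : ∀ S, IsProbabilityMeasure (P S))
    (hP_meas : Measurable P) :
    ENNReal.ofReal (1 - δ - δ') ≤
      ((Measure.pi fun _ : Fin N => D).bind fun S =>
          (Measure.pi fun _ : Fin L => P S).map fun ps => (S, ps))
        {x : (Fin N → Env) × (Fin L → Pol) | klDiv (P x.1) P0 ≠ ⊤ →
          trueReward D R (P x.1) ≥
            (1 / ((N : ℝ) * L)) * ∑ i : Fin L, ∑ j : Fin N, R (x.2 i) (x.1 j)
              - Real.sqrt (Real.log (2 / δ') / (2 * L))
              - Real.sqrt
                  (((klDiv (P x.1) P0).toReal + Real.log (2 * Real.sqrt N / δ)) / (2 * N))} := by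
  obtain ⟨d0, d1⟩ := hδ
  obtain ⟨d0', d1'⟩ := hδ'
  have hN' : (0 : ℝ) < N := by exact_mod_cast hN
  have hL' : (0 : ℝ) < L := by exact_mod_cast hL
  have hs0 : 0 < Real.sqrt N := Real.sqrt_pos.2 hN'
  have hm : Measurable fun p => ∫ E, R p E ∂D :=
    (hR_meas.stronglyMeasurable.integral_prod_right (ν := D)).measurable
  have hRj : ∀ j : Fin N, Measurable fun x : (Fin N → Env) × Pol => R x.2 (x.1 j) := fun j =>
    hR_meas.comp (measurable_snd.prodMk ((measurable_pi_apply j).comp measurable_fst))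
  have hF : Measurable fun x : (Fin N → Env) × Pol => ENNReal.ofReal (Real.exp
      ((max (2 / Real.sqrt N * ∑ j, (R x.2 (x.1 j) - ∫ E, R x.2 E ∂D)) 0) ^ 2 / 2)) := by
    have h1 : Measurable fun x : (Fin N → Env) × Pol =>
        ∑ j, (R x.2 (x.1 j) - ∫ E, R x.2 E ∂D) :=
      Finset.measurable_sum _ fun j _ => (hRj j).sub (hm.comp measurable_snd)
    exact ((((h1.const_mul _).max measurable_const).pow_const 2).div_const 2).exp.ennreal_ofReal
  set Z : (Fin N → Env) → ℝ≥0∞ := fun S => ∫⁻ p, ENNReal.ofReal (Real.exp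
      ((max (2 / Real.sqrt N * ∑ j, (R p (S j) - ∫ E, R p E ∂D)) 0) ^ 2 / 2)) ∂P0 with hZ
  have hZm : Measurable Z := hF.lintegral_prod_right'
  have hZint : ∫⁻ S, Z S ∂(Measure.pi fun _ : Fin N => D) ≤ ENNReal.ofReal (2 * Real.sqrt N) := by
    rw [hZ, lintegral_lintegral_swap hF.aemeasurable]
    calc _ ≤ ∫⁻ p, ENNReal.ofReal (2 * Real.sqrt N) ∂P0 := lintegral_mono fun p =>
          aux_expmoment D (R p) (hR_meas.comp measurable_prodMk_left) (hR_bdd p) N hN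
      _ = _ := by simp
  set G : Set (Fin N → Env) := {S | Z S < ENNReal.ofReal (2 * Real.sqrt N / δ)} with hG
  have hGm : MeasurableSet G := measurableSet_lt hZm measurable_const
  have hGμ : ENNReal.ofReal (1 - δ) ≤ (Measure.pi fun _ : Fin N => D) G := by
    have h1 : (Measure.pi fun _ : Fin N => D) Gᶜ ≤ ENNReal.ofReal δ := by
      have e : Gᶜ = {S | ENNReal.ofReal (2 * Real.sqrt N / δ) ≤ Z S} := by
        ext S; simp [hG]
      rw [e]
      refine (meas_ge_le_lintegral_div hZm.aemeasurable ?_ ENNReal.ofReal_ne_top).trans ?_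
      · simp; positivity
      · refine (ENNReal.div_le_div_right hZint _).trans (le_of_eq ?_)
        rw [← ENNReal.ofReal_div_of_pos (by positivity)]
        congr 1
        field_simp
    have h2 := prob_compl_eq_one_sub (μ := Measure.pi fun _ : Fin N => D) hGm.compl
    rw [compl_compl] at h2
    rw [h2, ENNReal.ofReal_sub _ d0.le, ENNReal.ofReal_one]
    exact tsub_le_tsub_left h1 _
  have hr : Measurable fun x : (Fin N → Env) × Pol => (1 / (N : ℝ)) * ∑ j, R x.2 (x.1 j) :=
    (Finset.measurable_sum _ fun j _ => hRj j).const_mul _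
  let κ : ProbabilityTheory.Kernel (Fin N → Env) Pol := ⟨P, hP_meas⟩
  have hκ : ProbabilityTheory.IsMarkovKernel κ := ⟨hP_prob⟩
  have hRS : Measurable fun S => ∫ p, (1 / (N : ℝ)) * ∑ j, R p (S j) ∂(P S) :=
    (hr.stronglyMeasurable.integral_kernel_prod_right' (κ := κ)).measurable
  set A : Set ((Fin N → Env) × (Fin L → Pol)) := {x | x.1 ∈ G ∧
    (1 / (L : ℝ)) * ∑ i, ((1 / (N : ℝ)) * ∑ j, R (x.2 i) (x.1 j))
      - Real.sqrt (Real.log (2 / δ') / (2 * L))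
      ≤ ∫ p, (1 / (N : ℝ)) * ∑ j, R p (x.1 j) ∂(P x.1)} with hA
  have hAm : MeasurableSet A := by
    refine (measurable_fst hGm).inter (measurableSet_le ?_ (hRS.comp measurable_fst))
    refine Measurable.sub_const (Measurable.const_mul (Finset.measurable_sum _ fun i _ => ?_) _) _
    exact hr.comp (measurable_fst.prodMk ((measurable_pi_apply i).comp measurable_snd))
  have hKm : Measurable fun S => (Measure.pi fun _ : Fin L => P S).map fun ps => (S, ps) := by
    refine Measure.measurable_of_measurable_coe _ fun s hs => ?_
    let η : ProbabilityTheory.Kernel (Fin N → Env) (Fin L → Pol) :=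
      ⟨fun S => Measure.pi fun _ : Fin L => P S, aux_meas_pi P hP_prob hP_meas L⟩
    have hη : ProbabilityTheory.IsMarkovKernel η :=
      ⟨fun S => by change IsProbabilityMeasure (Measure.pi fun _ : Fin L => P S); infer_instance⟩
    have := ProbabilityTheory.Kernel.measurable_kernel_prodMk_left (κ := η) hs
    convert this using 2 with S
    rw [Measure.map_apply measurable_prodMk_left hs]
    rfl
  have hAμ : ENNReal.ofReal (1 - δ - δ') ≤ ((Measure.pi fun _ : Fin N => D).bind fun S =>
          (Measure.pi fun _ : Fin L => P S).map fun ps => (S, ps)) A := by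
    rw [Measure.bind_apply hAm hKm.aemeasurable]
    calc ENNReal.ofReal (1 - δ - δ') ≤ ENNReal.ofReal ((1 - δ') * (1 - δ)) :=
          ENNReal.ofReal_le_ofReal (by nlinarith)
      _ = ENNReal.ofReal (1 - δ') * ENNReal.ofReal (1 - δ) :=
          ENNReal.ofReal_mul (by linarith)
      _ ≤ ENNReal.ofReal (1 - δ') * (Measure.pi fun _ : Fin N => D) G := by gcongr
      _ = ∫⁻ S, G.indicator (fun _ => ENNReal.ofReal (1 - δ')) S
            ∂(Measure.pi fun _ : Fin N => D) := by
          rw [lintegral_indicator_const hGm]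
      _ ≤ _ := by
          refine lintegral_mono fun S => ?_
          by_cases hS : S ∈ G
          · rw [Set.indicator_of_mem hS, Measure.map_apply measurable_prodMk_left hAm]
            have := aux_hoeffding (P S) (fun p => (1 / (N : ℝ)) * ∑ j, R p (S j))
              (hr.comp measurable_prodMk_left)
              (fun p => aux_avg N hN _ fun j => hR_bdd p (S j)) L hL δ' ⟨d0', d1'⟩
            refine this.trans (measure_mono fun ω hω => ?_)
            exact ⟨hS, hω⟩
          · rw [Set.indicator_of_notMem hS]; exact zero_le
  refine hAμ.trans (measure_mono ?_)
  rintro ⟨S, ps⟩ ⟨hS, hh⟩ hkl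
  have hdet := aux_det D R hR_meas hR_bdd P0 N hN δ d0 S (P S) hkl hS
  simp only at hh hdet ⊢
  rw [← Finset.mul_sum, ← mul_assoc, one_div_mul_one_div, mul_comm (L : ℝ)] at hh
  linarith
end

section
/- Let S be a set of states, A a finite nonempty set of actions, f : S × A → S deterministic dynamics, and g : S → ℝ a safety margin function whose zero superlevel set {s : g(s) > 0} is the failure set. Suppose Q : S × A → ℝ satisfies the undiscounted safety Bellman equation Q(s,a) = max{ g(s), min_{a'∈A} Q(f(s,a), a') } for all (s,a). Consider a trajectory s_0, s_1, s_2, … generated by actions a_0, a_1, … via s_{t+1} = f(s_t, a_t), where Q(s_0, a_0) ≤ 0 and, for every t ≥ 1, the applied action satisfies Q(s_t, a_t) = min_{a∈A} Q(s_t, a) or Q(s_t, a_t) ≤ 0 (i.e., a shielded policy which overrides any proposed action a with Q(s_t, a) > 0 by a minimizing backup action). Then for every t ≥ 0, Q(s_t, a_t) ≤ 0 and g(s_t) ≤ 0; in particular the trajectory never enters the failure set. -/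
/-- **Shielding with the safety Bellman fixed point never enters the failure set.**
Let `Q` satisfy the undiscounted safety Bellman equation
`Q(s,a) = max{g(s), min_{a'} Q(f(s,a), a')}`.  Along a trajectory where the initial
action is safe (`Q(s_0,a_0) ≤ 0`) and every subsequent applied action either minimizes
`Q(s_t,·)` (backup action) or satisfies `Q(s_t,a_t) ≤ 0` (safe proposed action), we have
`Q(s_t,a_t) ≤ 0` and `g(s_t) ≤ 0` for all `t`: the failure set `{s : g(s) > 0}` is
never entered. -/
theorem shielding_safe
    {S A : Type*} [Fintype A] [Nonempty A]
    (f : S → A → S) (g : S → ℝ) (Q : S → A → ℝ)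
    (hQ : ∀ s a, Q s a = max (g s) (⨅ a' : A, Q (f s a) a'))
    (s : ℕ → S) (a : ℕ → A)
    (hdyn : ∀ t, s (t + 1) = f (s t) (a t))
    (h0 : Q (s 0) (a 0) ≤ 0)
    (hshield : ∀ t, 1 ≤ t → Q (s t) (a t) = (⨅ a' : A, Q (s t) a') ∨ Q (s t) (a t) ≤ 0) :
    ∀ t, Q (s t) (a t) ≤ 0 ∧ g (s t) ≤ 0 := by
  have key : ∀ t, Q (s t) (a t) ≤ 0 := by
    intro t
    induction t with
    | zero => exact h0
    | succ t ih =>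
      rcases hshield (t + 1) (Nat.le_add_left 1 t) with h | h
      · rw [h, hdyn t]
        rw [hQ (s t) (a t)] at ih
        exact (le_max_right _ _).trans ih
      · exact h
  intro t
  refine ⟨key t, ?_⟩
  have h := key t
  rw [hQ (s t) (a t)] at h
  exact (le_max_left _ _).trans h
end

section
/- Let S be a set of states, A a finite nonempty set of actions, f : S × A → S deterministic dynamics, g : S → ℝ a bounded safety margin function, and γ ∈ [0,1). On the space of bounded functions Q : S × A → ℝ equipped with the supremum norm, the discounted safety Bellman operator (B_γ Q)(s,a) = (1−γ)·g(s) + γ·max{ g(s), min_{a'∈A} Q(f(s,a), a') } maps bounded functions to bounded functions and is a contraction with modulus γ: ‖B_γ Q_1 − B_γ Q_2‖_∞ ≤ γ‖Q_1 − Q_2‖_∞ for all bounded Q_1, Q_2. Consequently B_γ has a unique bounded fixed point. -/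
/-- The discounted safety Bellman operator
`(B_γ Q)(s,a) = (1−γ)·g(s) + γ·max{ g(s), min_{a'∈A} Q(f(s,a), a') }`. -/
noncomputable def dsbeOperator {S A : Type*} [Fintype A] [Nonempty A]
    (f : S → A → S) (g : S → ℝ) (γ : ℝ) (Q : S → A → ℝ) : S → A → ℝ :=
  fun s a => (1 - γ) * g s + γ * max (g s) (⨅ a' : A, Q (f s a) a')

/-- `Q : S → A → ℝ` is bounded (in supremum norm). -/
def IsBoundedQ {S A : Type*} (Q : S → A → ℝ) : Prop :=
  ∃ C : ℝ, ∀ s a, |Q s a| ≤ C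

theorem dsbe_aux_contr {S A : Type*} [Fintype A] [Nonempty A]
    (f : S → A → S) (g : S → ℝ) (γ : ℝ) (hγ0 : 0 ≤ γ) (Q₁ Q₂ : S → A → ℝ)
    (C : ℝ) (h : ∀ s a, |Q₁ s a - Q₂ s a| ≤ C) (s : S) (a : A) :
    |dsbeOperator f g γ Q₁ s a - dsbeOperator f g γ Q₂ s a| ≤ γ * C := by
  have key : ∀ P₁ P₂ : S → A → ℝ, (∀ s a, |P₁ s a - P₂ s a| ≤ C) →
      (⨅ a' : A, P₁ (f s a) a') ≤ (⨅ a' : A, P₂ (f s a) a') + C := by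
    intro P₁ P₂ hP
    rw [← sub_le_iff_le_add]
    refine le_ciInf fun b => ?_
    have h1 : (⨅ a' : A, P₁ (f s a) a') ≤ P₁ (f s a) b :=
      ciInf_le (Set.finite_range _).bddBelow b
    have h2 := (abs_le.mp (hP (f s a) b)).2
    linarith
  have h1 := key Q₁ Q₂ h
  have h2 := key Q₂ Q₁ (fun s a => by rw [abs_sub_comm]; exact h s a)
  have h3 : |max (g s) (⨅ a' : A, Q₁ (f s a) a') - max (g s) (⨅ a' : A, Q₂ (f s a) a')| ≤ C := by
    refine (abs_max_sub_max_le_max _ _ _ _).trans ?_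
    have hC : 0 ≤ C := (abs_nonneg _).trans (h s a)
    simp only [sub_self, abs_zero]
    refine max_le hC (abs_le.mpr ⟨?_, ?_⟩) <;> linarith
  have h4 : dsbeOperator f g γ Q₁ s a - dsbeOperator f g γ Q₂ s a =
      γ * (max (g s) (⨅ a' : A, Q₁ (f s a) a') - max (g s) (⨅ a' : A, Q₂ (f s a) a')) := by
    simp only [dsbeOperator]; ring
  rw [h4, abs_mul, abs_of_nonneg hγ0]
  exact mul_le_mul_of_nonneg_left h3 hγ0

theorem dsbe_aux_bdd {S A : Type*} [Fintype A] [Nonempty A]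
    (f : S → A → S) (g : S → ℝ) (hg : ∃ C : ℝ, ∀ s, |g s| ≤ C)
    (γ : ℝ) (hγ0 : 0 ≤ γ) (hγ1 : γ < 1) (Q : S → A → ℝ) (hQ : IsBoundedQ Q) :
    IsBoundedQ (dsbeOperator f g γ Q) := by
  obtain ⟨G, hG⟩ := hg
  obtain ⟨C, hC⟩ := hQ
  refine ⟨γ * C + G, fun s a => ?_⟩
  have h1 := dsbe_aux_contr f g γ hγ0 Q (fun _ _ => 0) C (by simpa using hC) s a
  have h2 : |dsbeOperator f g γ (fun _ _ => 0) s a| ≤ G := by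
    have hgs := abs_le.mp (hG s)
    have hm : |max (g s) 0| ≤ G := by
      rw [abs_of_nonneg (le_max_right _ _)]
      exact max_le hgs.2 ((abs_nonneg _).trans (hG s))
    have hm := abs_le.mp hm
    simp only [dsbeOperator, ciInf_const]
    rw [abs_le]
    constructor <;> nlinarith
  have h3 := abs_sub_abs_le_abs_sub (dsbeOperator f g γ Q s a)
    (dsbeOperator f g γ (fun _ _ => 0) s a)
  linarith

theorem dsbe_aux_fix {S A : Type*} [Fintype A] [Nonempty A]
    (f : S → A → S) (g : S → ℝ) (hg : ∃ C : ℝ, ∀ s, |g s| ≤ C)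
    (γ : ℝ) (hγ0 : 0 ≤ γ) (hγ1 : γ < 1) :
    ∃! Q : {Q : S → A → ℝ // IsBoundedQ Q}, dsbeOperator f g γ Q.1 = Q.1 := by
  let _ : TopologicalSpace (S × A) := ⊥
  have _ : DiscreteTopology (S × A) := ⟨rfl⟩
  have hb : ∀ F : BoundedContinuousFunction (S × A) ℝ, IsBoundedQ (fun s a => F (s, a)) :=
    fun F => ⟨‖F‖, fun s a => F.norm_coe_le_norm (s, a)⟩
  choose K hK using fun F => dsbe_aux_bdd f g hg γ hγ0 hγ1 _ (hb F)
  let T : BoundedContinuousFunction (S × A) ℝ → BoundedContinuousFunction (S × A) ℝ := fun F =>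
    BoundedContinuousFunction.ofNormedAddCommGroupDiscrete
      (fun p => dsbeOperator f g γ (fun s a => F (s, a)) p.1 p.2) (K F) (fun p => hK F p.1 p.2)
  have hTa : ∀ F p, T F p = dsbeOperator f g γ (fun s a => F (s, a)) p.1 p.2 := fun _ _ => rfl
  clear_value T
  have hT : ContractingWith ⟨γ, hγ0⟩ T := by
    refine ⟨by exact_mod_cast hγ1, LipschitzWith.of_dist_le_mul fun F₁ F₂ => ?_⟩
    refine (BoundedContinuousFunction.dist_le (by positivity)).mpr fun p => ?_
    have h := dsbe_aux_contr f g γ hγ0 (fun s a => F₁ (s, a)) (fun s a => F₂ (s, a)) (dist F₁ F₂)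
      (fun s a => by
        rw [← Real.dist_eq]
        exact BoundedContinuousFunction.dist_coe_le_dist (s, a)) p.1 p.2
    rw [Real.dist_eq, hTa, hTa]
    exact h
  have hfix : T (ContractingWith.fixedPoint T hT) = ContractingWith.fixedPoint T hT :=
    hT.fixedPoint_isFixedPt
  refine ⟨⟨fun s a => ContractingWith.fixedPoint T hT (s, a), hb _⟩, ?_, ?_⟩
  · funext s a
    have h := DFunLike.congr_fun hfix (s, a)
    rw [hTa] at h
    exact h
  · rintro ⟨Q, hQ⟩ hfQ
    obtain ⟨C, hC⟩ := id hQ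
    let F : BoundedContinuousFunction (S × A) ℝ :=
      BoundedContinuousFunction.ofNormedAddCommGroupDiscrete
        (fun p => Q p.1 p.2) C (fun p => hC p.1 p.2)
    have hF : T F = F := by
      ext p
      rw [hTa]
      exact congrFun (congrFun hfQ p.1) p.2
    have := hT.fixedPoint_unique hF
    apply Subtype.ext
    funext s a
    exact DFunLike.congr_fun this (s, a)

/-- **Contraction of the discounted safety Bellman operator.**  For bounded `g` and
`γ ∈ [0,1)`, the operator `B_γ` maps bounded functions to bounded functions and is a
`γ`-contraction in the supremum norm (`‖B_γQ₁ − B_γQ₂‖_∞ ≤ γ‖Q₁ − Q₂‖_∞`, expressed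
via arbitrary uniform bounds `C` on `|Q₁ − Q₂|`); consequently it has a unique
bounded fixed point. -/
theorem dsbe_contraction_unique_fixed_point
    {S A : Type*} [Fintype A] [Nonempty A]
    (f : S → A → S) (g : S → ℝ) (hg : ∃ C : ℝ, ∀ s, |g s| ≤ C)
    (γ : ℝ) (hγ0 : 0 ≤ γ) (hγ1 : γ < 1) :
    (∀ Q : S → A → ℝ, IsBoundedQ Q → IsBoundedQ (dsbeOperator f g γ Q)) ∧
      (∀ Q₁ Q₂ : S → A → ℝ, IsBoundedQ Q₁ → IsBoundedQ Q₂ →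
        ∀ C : ℝ, (∀ s a, |Q₁ s a - Q₂ s a| ≤ C) →
          ∀ s a, |dsbeOperator f g γ Q₁ s a - dsbeOperator f g γ Q₂ s a| ≤ γ * C) ∧
      (∃! Q : {Q : S → A → ℝ // IsBoundedQ Q}, dsbeOperator f g γ Q.1 = Q.1) := by
  exact ⟨dsbe_aux_bdd f g hg γ hγ0 hγ1,
    fun Q₁ Q₂ _ _ C h s a => dsbe_aux_contr f g γ hγ0 Q₁ Q₂ C h s a,
    dsbe_aux_fix f g hg γ hγ0 hγ1⟩
end
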